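/- arXiv:math/0701601 — 7 statements merged into one kernel-verified Lean document; each statement's English description precedes it below -/
import Mathlib

section
/- Let s ≥ 1 and let (g_{n,1},…,g_{n,s}), n ∈ ℕ, be a sequence of s-tuples of elements of Thompson's group F such that the sequence of marked groups (F,(x₀,x₁,g_{n,1},…,g_{n,s})) is convergent in the space of marked groups, and let 𝔾 be its limit group, marked by the images x̄₀, x̄₁, ḡ₁, …, ḡ_s of the free generators. Then for every nontrivial group K there is no group isomorphism φ : 𝔾 → F ∗ K (the free product of F and K) such that φ(x̄₀) and φ(x̄₁) are the images of x₀ and x₁ under the canonical inclusion F → F ∗ K. -/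
/-!
The obstruction is a law with constants satisfied by `F`. Let `F` act on the real line, `xₙ` being
the identity on `(-∞, n]`, contracting `[n, n + 2]` onto `[n, n + 1]`, and translating by `-1` on
`[n + 2, ∞)`. Then `a = x₀x₁⁻¹` is supported in `(-∞, 2]` and `b = x₂` in `[2, ∞)`. For `h ∈ F`,
if `h 2 ≤ 2` then `h a h⁻¹` is supported in `(-∞, 2]` and commutes with `b`; otherwise `h b h⁻¹` is
supported in `[2, ∞)` and commutes with `a` (`thompson_dichotomy`). If a limit of markings were
`F ∗ K`, then, lifting some `k ≠ 1` of `K` to a word and applying this to the values of the word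
along the sequence, convergence would force `k a k⁻¹` to commute with `b`, or `k b k⁻¹` with `a`,
in `F ∗ K`. Neither holds (`coprod_not_commute`).

As `F` is given by its presentation, the action has to be shown faithful (`rho_injective`). From
the two relators one derives `xⱼxᵢ = xᵢxⱼ₊₁` for all `i < j`. Hence every element of `F` is `pq⁻¹`
with `p`, `q` products of the `xₙ` along nondecreasing sequences of indices, and the action
determines such a sequence, because its first term is visible on the line.
-/

/-- The commutator `[a, b] = a⁻¹ b⁻¹ a b`. -/
def commWord {G : Type*} [Group G] (a b : G) : G := a⁻¹ * b⁻¹ * a * b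

/-- The two defining relators of Thompson's group `F`:
`[x₀x₁⁻¹, x₀⁻ⁱx₁x₀ⁱ]` for `i = 1, 2`. -/
def thompsonRels : Set (FreeGroup (Fin 2)) :=
  {r | ∃ i ∈ ({1, 2} : Set ℕ),
    r = commWord (FreeGroup.of 0 * (FreeGroup.of 1)⁻¹)
        ((FreeGroup.of 0)⁻¹ ^ i * FreeGroup.of 1 * FreeGroup.of 0 ^ i)}

/-- Thompson's group `F`. -/
abbrev ThompsonF : Type := PresentedGroup thompsonRels

/-- The standard generator `x₀` of Thompson's group `F`. -/
def tx0 : ThompsonF := PresentedGroup.of 0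

/-- The standard generator `x₁` of Thompson's group `F`. -/
def tx1 : ThompsonF := PresentedGroup.of 1

/-! ### Noncommutation in free products -/

open Classical in
/-- The action of `A` on `A × B` by left translations of the fibre `A × {1}`, all other points
being fixed. -/
noncomputable def fibreLeft (A B : Type*) [Group A] [Group B] : A →* Equiv.Perm (A × B) where
  toFun x :=
    { toFun := fun p => if p.2 = 1 then (x * p.1, p.2) else p
      invFun := fun p => if p.2 = 1 then (x⁻¹ * p.1, p.2) else p
      left_inv := by rintro ⟨u, v⟩; by_cases h : v = 1 <;> simp [h]
      right_inv := by rintro ⟨u, v⟩; by_cases h : v = 1 <;> simp [h] }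
  map_one' := by ext p <;> simp
  map_mul' x y := by
    refine Equiv.ext fun p => ?_
    by_cases h : p.2 = 1 <;> simp [h, mul_assoc]

open Classical in
/-- The action of `B` on `A × B` by left translations of the fibre `{1} × B`, all other points
being fixed. -/
noncomputable def fibreRight (A B : Type*) [Group A] [Group B] : B →* Equiv.Perm (A × B) where
  toFun y :=
    { toFun := fun p => if p.1 = 1 then (p.1, y * p.2) else p
      invFun := fun p => if p.1 = 1 then (p.1, y⁻¹ * p.2) else p
      left_inv := by rintro ⟨u, v⟩; by_cases h : u = 1 <;> simp [h]
      right_inv := by rintro ⟨u, v⟩; by_cases h : u = 1 <;> simp [h] }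
  map_one' := by ext p <;> simp
  map_mul' x y := by
    refine Equiv.ext fun p => ?_
    by_cases h : p.1 = 1 <;> simp [h, mul_assoc]

/-- The two fibre actions define an action of `A ∗ B` on `A × B` in which the two sides move the
point `(1, k)` to `(a, 1)` and `(b * a, 1)` respectively. -/
theorem coprod_not_commute {A B : Type*} [Group A] [Group B] {a b : A} {k : B}
    (ha : a ≠ 1) (hb : b ≠ 1) (hk : k ≠ 1) :
    ¬ Commute ((Monoid.Coprod.inr k * Monoid.Coprod.inl a * (Monoid.Coprod.inr k)⁻¹ :
      Monoid.Coprod A B)) (Monoid.Coprod.inl b) := by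
  intro h
  have h1 := congrArg (fun z => (Monoid.Coprod.lift (fibreLeft A B) (fibreRight A B) z) (1, k)) h.eq
  simp only [map_mul, map_inv, Monoid.Coprod.lift_apply_inl, Monoid.Coprod.lift_apply_inr] at h1
  simp only [← map_inv] at h1
  simp [fibreLeft, fibreRight, ha, hk] at h1
  exact hb h1

/-! ### The action on the line -/

/-- The homeomorphism of the line by which `xₙ` acts: the identity on `(-∞, n]`, of slope `1/2` on
`[n, n + 2]`, and `t ↦ t - 1` on `[n + 2, ∞)`. -/
noncomputable def lineMap (n : ℕ) : ℝ ≃o ℝ where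
  toFun t := t - max 0 (min 1 ((t - n) / 2))
  invFun t := t + max 0 (min 1 (t - n))
  left_inv t := by
    simp only [max_def, min_def]; split_ifs <;> linarith
  right_inv t := by
    simp only [max_def, min_def]; split_ifs <;> linarith
  map_rel_iff' := by
    intro s t
    simp only [Equiv.coe_fn_mk, max_def, min_def]
    split_ifs <;> constructor <;> intro h <;> linarith

theorem lineMap_apply (n : ℕ) (t : ℝ) : lineMap n t = t - max 0 (min 1 ((t - n) / 2)) := rfl

theorem lineMap_inv_apply (n : ℕ) (t : ℝ) : (lineMap n)⁻¹ t = t + max 0 (min 1 (t - n)) := rfl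

theorem lineMap_of_le {n : ℕ} {t : ℝ} (h : t ≤ n) : lineMap n t = t := by
  rw [lineMap_apply]; simp only [max_def, min_def]; split_ifs <;> linarith

theorem lineMap_le (n : ℕ) (t : ℝ) : lineMap n t ≤ t := by
  rw [lineMap_apply]; simp

theorem lineMap_lt (n : ℕ) : lineMap n (n + 1) < n + 1 := by
  rw [lineMap_apply]; norm_num

theorem lineMap_conj {n : ℕ} (hn : 1 ≤ n) :
    (lineMap 0)⁻¹ * lineMap n * lineMap 0 = lineMap (n + 1) := by
  have hn' : (1 : ℝ) ≤ n := by exact_mod_cast hn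
  rw [mul_assoc, inv_mul_eq_iff_eq_mul]
  refine RelIso.ext fun t => ?_
  simp only [RelIso.coe_mul, Function.comp_apply]
  rcases le_total t (n + 1) with h | h
  · rw [lineMap_of_le (n := n + 1) (by exact_mod_cast h), lineMap_of_le]
    rw [lineMap_apply]; push_cast
    simp only [max_def, min_def]; split_ifs <;> linarith
    -- In the remaining case `x₀` translates both `t` and its image under `xₙ₊₁` by `-1`.
  · have shift : ∀ r : ℝ, 2 ≤ r → lineMap 0 r = r - 1 := fun r hr => by
      rw [lineMap_apply, min_eq_left (by push_cast; linarith), max_eq_right zero_le_one]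
    have h2 : 2 ≤ lineMap (n + 1) t := by
      have := (lineMap (n + 1)).monotone h
      rw [lineMap_of_le (by push_cast; exact le_rfl)] at this
      linarith
    rw [shift t (by linarith), shift _ h2, lineMap_apply, lineMap_apply]
    push_cast
    rw [sub_sub t 1 (n : ℝ), add_comm (1 : ℝ)]
    ring

/-- Homeomorphisms of the line with supports on either side of `c` commute. -/
theorem commute_of_support {u v : ℝ ≃o ℝ} (c : ℝ) (hu : ∀ t, c ≤ t → u t = t)
    (hv : ∀ t, t ≤ c → v t = t) : Commute u v := by
  refine RelIso.ext fun t => ?_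
  simp only [RelIso.coe_mul, Function.comp_apply]
  rcases le_total t c with h | h
  · have h1 : u t ≤ c := by
      have := u.monotone h
      rwa [hu c le_rfl] at this
    rw [hv t h, hv _ h1]
  · have h1 : c ≤ v t := by
      have := v.monotone h
      rwa [hv c le_rfl] at this
    rw [hu t h, hu _ h1]

theorem lineMap_left_support (t : ℝ) (ht : 2 ≤ t) : (lineMap 0 * (lineMap 1)⁻¹) t = t := by
  simp only [RelIso.coe_mul, Function.comp_apply, lineMap_apply, lineMap_inv_apply]
  push_cast
  simp only [max_def, min_def]
  split_ifs <;> linarith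

theorem commWord_eq_one_iff {G : Type*} [Group G] (a b : G) :
    commWord a b = 1 ↔ Commute a b := by
  rw [commWord, commute_iff_eq, mul_assoc, ← mul_inv_rev, inv_mul_eq_one, eq_comm]

/-- The action of Thompson's group on the line. -/
noncomputable def rho : ThompsonF →* (ℝ ≃o ℝ) :=
  PresentedGroup.toGroup (f := ![lineMap 0, lineMap 1]) (by
    have h2 := lineMap_conj (n := 1) le_rfl
    have h3 := lineMap_conj (n := 2) (by norm_num)
    rintro r ⟨i, hi, rfl⟩
    have key : ∀ n : ℕ, 2 ≤ n → Commute (lineMap 0 * (lineMap 1)⁻¹) (lineMap n) := fun n hn =>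
      commute_of_support 2 lineMap_left_support fun t ht =>
        lineMap_of_le (ht.trans (by exact_mod_cast hn))
    have hcomm := (commWord_eq_one_iff _ _).2 (key (i + 1) (by rcases hi with rfl | rfl <;> simp))
    have hconj : (lineMap 0)⁻¹ ^ i * lineMap 1 * lineMap 0 ^ i = lineMap (i + 1) := by
      rcases hi with rfl | rfl
      · simpa using h2
      · rw [← h3, ← h2]; simp only [pow_two, mul_assoc]
    rw [← hconj] at hcomm
    simpa [commWord] using hcomm)

/-! ### Normal forms in Thompson's group -/

/-- The infinite family of generators `xₙ` of Thompson's group, with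
`xₙ₊₁ = x₀⁻ⁿ x₁ x₀ⁿ`. -/
def genX : ℕ → ThompsonF
  | 0 => tx0
  | n + 1 => (tx0 ^ n)⁻¹ * tx1 * tx0 ^ n

theorem genX_conj_zero {n : ℕ} (hn : 1 ≤ n) : tx0⁻¹ * genX n * tx0 = genX (n + 1) := by
  obtain ⟨m, rfl⟩ := Nat.exists_eq_add_of_le' hn
  simp only [genX, pow_succ]; group

theorem genX_conj_pow {n : ℕ} (hn : 1 ≤ n) (m : ℕ) :
    (tx0 ^ m)⁻¹ * genX n * tx0 ^ m = genX (n + m) := by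
  induction m with
  | zero => simp
  | succ m ih =>
    rw [← add_assoc, ← genX_conj_zero (by omega : 1 ≤ n + m), ← ih, pow_succ]; group

theorem genX_one : genX 1 = tx1 := by simp [genX]

theorem rho_genX (n : ℕ) : rho (genX n) = lineMap n := by
  have h0 : rho tx0 = lineMap 0 := by simp [rho, tx0]
  have h1 : rho tx1 = lineMap 1 := by simp [rho, tx1]
  induction n with
  | zero => exact h0
  | succ n ih =>
    rcases Nat.eq_zero_or_pos n with rfl | hn
    · rw [genX_one, h1]
    · rw [← genX_conj_zero hn, ← lineMap_conj hn, map_mul, map_mul, map_inv, ih, h0]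

theorem commute_of_rel {i : ℕ} (hi : i ∈ ({1, 2} : Set ℕ)) :
    Commute (tx0 * tx1⁻¹) (genX (i + 1)) := by
  have h := PresentedGroup.one_of_mem (rels := thompsonRels) ⟨i, hi, rfl⟩
  rw [← commWord_eq_one_iff]
  simpa [commWord, genX, tx0, tx1, PresentedGroup.of] using h

/-- If `x₀x₁⁻¹` commutes with `xⱼ` then `x₁` conjugates `xⱼ` as `x₀` does. -/
theorem conj_one_of_commute {j : ℕ} (hj : 1 ≤ j) (h : Commute (tx0 * tx1⁻¹) (genX j)) :
    tx1⁻¹ * genX j * tx1 = genX (j + 1) := by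
  rw [← genX_conj_zero hj]
  have h' : genX j = (tx0 * tx1⁻¹)⁻¹ * genX j * (tx0 * tx1⁻¹) := by
    rw [mul_assoc, ← h.eq]; group
  conv_rhs => rw [← mul_one tx0, ← inv_mul_cancel tx1, ← mul_assoc tx0]
  calc tx1⁻¹ * genX j * tx1
      = tx1⁻¹ * ((tx0 * tx1⁻¹)⁻¹ * genX j * (tx0 * tx1⁻¹)) * tx1 := by rw [← h']
    _ = _ := by group

/-- The relators for `i = 1, 2` imply all the others: from the known commutations,
`xⱼ₊₁ = xⱼ₋₁⁻¹ xⱼ xⱼ₋₁` for `j ≥ 2`, so that `xⱼ₊₁` commutes with `x₀x₁⁻¹` once `xⱼ₋₁` and `xⱼ`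
do. -/
theorem commute_genX (j : ℕ) : Commute (tx0 * tx1⁻¹) (genX (j + 2)) := by
  have h2 : Commute (tx0 * tx1⁻¹) (genX 2) := commute_of_rel (i := 1) (by simp)
  have h3 : Commute (tx0 * tx1⁻¹) (genX 3) := commute_of_rel (i := 2) (by simp)
  have hrec : ∀ m : ℕ, (genX (m + 1))⁻¹ * genX (m + 2) * genX (m + 1) = genX (m + 3) := by
    intro m
    have h := conj_one_of_commute (by norm_num) h2
    rw [← genX_one] at h
    rw [add_comm m 1, add_comm m 2, add_comm m 3, ← genX_conj_pow (n := 3) (by norm_num),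
      ← genX_conj_pow (n := 2) (by norm_num), ← genX_conj_pow (n := 1) le_rfl, ← h]
    group
  induction j using Nat.strong_induction_on with
  | _ j ih =>
    match j, ih with
    | 0, _ => exact h2
    | 1, _ => exact h3
    | j + 2, ih =>
      have e := hrec (j + 1)
      have a1 := ih j (by omega)
      have a2 := ih (j + 1) (by omega)
      have e' : genX (j + 2 + 2) = (genX (j + 2))⁻¹ * genX (j + 1 + 2) * genX (j + 2) := e.symm
      rw [e']
      exact (a1.inv_right.mul_right a2).mul_right a1

theorem genX_swap {i j : ℕ} (hij : i < j) : genX j * genX i = genX i * genX (j + 1) := by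
  rcases Nat.eq_zero_or_pos i with rfl | hi
  · rw [← genX_conj_zero (by omega : 1 ≤ j)]
    simp only [genX]; group
  · obtain ⟨m, rfl⟩ := Nat.exists_eq_add_of_le' hi
    obtain ⟨d, rfl⟩ := Nat.exists_eq_add_of_lt hij
    have h := conj_one_of_commute (by omega) (commute_genX d)
    rw [← genX_one] at h
    rw [show m + 1 + d + 1 + 1 = (d + 2 + 1) + m by ring,
      show m + 1 + d + 1 = (d + 2) + m by ring, add_comm m 1,
      ← genX_conj_pow (n := d + 2 + 1) (by omega), ← genX_conj_pow (n := d + 2) (by omega),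
      ← genX_conj_pow (n := 1) le_rfl, ← h]
    group

/-- The positive word `xᵢ₁ xᵢ₂ ⋯` attached to a list of indices. -/
def posWord (l : List ℕ) : ThompsonF := (l.map genX).prod

theorem posWord_cons (i : ℕ) (l : List ℕ) : posWord (i :: l) = genX i * posWord l := by
  simp [posWord]

theorem posWord_insert (l : List ℕ) (hl : l.Pairwise (· ≤ ·)) (j : ℕ) :
    ∃ l' : List ℕ, l'.Pairwise (· ≤ ·) ∧ posWord l' = genX j * posWord l ∧
      ∀ m, m ≤ j → (∀ i ∈ l, m ≤ i) → ∀ i ∈ l', m ≤ i := by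
  induction l generalizing j with
  | nil =>
    exact ⟨[j], by simp, posWord_cons _ _, by simp⟩
  | cons i t ih =>
    rw [List.pairwise_cons] at hl
    rcases le_or_gt j i with h | h
    · refine ⟨j :: i :: t, ?_, posWord_cons _ _, ?_⟩
      · simp only [List.pairwise_cons, List.mem_cons]
        refine ⟨?_, hl⟩
        rintro k (rfl | hk)
        · exact h
        · exact h.trans (hl.1 k hk)
      · intro m hm hi k hk
        rcases List.mem_cons.1 hk with rfl | hk
        · exact hm
        · exact hi k hk
    · obtain ⟨t', ht', e, hb⟩ := ih hl.2 (j + 1)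
      refine ⟨i :: t', ?_, ?_, ?_⟩
      · rw [List.pairwise_cons]
        exact ⟨hb i (by omega) hl.1, ht'⟩
      · rw [posWord_cons, posWord_cons, e, ← mul_assoc, ← mul_assoc, genX_swap h]
      · intro m hm hi k hk
        rcases List.mem_cons.1 hk with rfl | hk
        · exact hi k (by simp)
        · exact hb m (by omega) (fun i' hi' => hi i' (by simp [hi'])) k hk

theorem posWord_sort (l : List ℕ) :
    ∃ l' : List ℕ, l'.Pairwise (· ≤ ·) ∧ posWord l' = posWord l := by
  induction l with
  | nil => exact ⟨[], by simp, rfl⟩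
  | cons i t ih =>
    obtain ⟨t', h1, h2⟩ := ih
    obtain ⟨l', h3, h4, -⟩ := posWord_insert t' h1 i
    exact ⟨l', h3, by rw [h4, h2, posWord_cons]⟩

/-- A negative letter can be moved to the right through a positive word, where it survives as at
most one negative letter. -/
theorem inv_genX_mul_posWord (n : ℕ) (l : List ℕ) :
    ∃ l₁ l₂ : List ℕ, (genX n)⁻¹ * posWord l = posWord l₁ * (posWord l₂)⁻¹ := by
  induction l generalizing n with
  | nil => exact ⟨[], [n], by simp [posWord]⟩
  | cons i t ih =>
    rcases lt_trichotomy n i with h | rfl | h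
    · obtain ⟨l₁, l₂, e⟩ := ih n
      refine ⟨(i + 1) :: l₁, l₂, ?_⟩
      have hs : (genX n)⁻¹ * genX i = genX (i + 1) * (genX n)⁻¹ := by
        rw [inv_mul_eq_iff_eq_mul, ← mul_assoc, ← genX_swap h, mul_inv_cancel_right]
      rw [posWord_cons, posWord_cons, ← mul_assoc, hs, mul_assoc, e, mul_assoc]
    · exact ⟨t, [], by simp [posWord]⟩
    · obtain ⟨l₁, l₂, e⟩ := ih (n + 1)
      refine ⟨i :: l₁, l₂, ?_⟩
      have hs : (genX n)⁻¹ * genX i = genX i * (genX (n + 1))⁻¹ := by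
        rw [inv_mul_eq_iff_eq_mul, ← mul_assoc, genX_swap h, mul_inv_cancel_right]
      rw [posWord_cons, posWord_cons, ← mul_assoc, hs, mul_assoc, e, mul_assoc]

theorem posWord_append (l l' : List ℕ) : posWord (l ++ l') = posWord l * posWord l' := by
  simp [posWord]

theorem exists_fraction (h : ThompsonF) :
    ∃ l₁ l₂ : List ℕ, h = posWord l₁ * (posWord l₂)⁻¹ := by
  have hmem : h ∈ Subgroup.closure (Set.range (PresentedGroup.of (rels := thompsonRels))) := by
    rw [PresentedGroup.closure_range_of]; trivial
  have hgen : ∀ x ∈ Set.range (PresentedGroup.of (rels := thompsonRels)), ∃ n, x = genX n := by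
    rintro _ ⟨i, rfl⟩
    fin_cases i
    · exact ⟨0, rfl⟩
    · exact ⟨1, genX_one.symm⟩
  induction hmem using Subgroup.closure_induction_left with
  | one => exact ⟨[], [], by simp [posWord]⟩
  | mul_left x hx y hy ih =>
    obtain ⟨n, rfl⟩ := hgen x hx
    obtain ⟨l₁, l₂, rfl⟩ := ih
    exact ⟨n :: l₁, l₂, by rw [posWord_cons, mul_assoc]⟩
  | inv_mul_cancel x hx y hy ih =>
    obtain ⟨n, rfl⟩ := hgen x hx
    obtain ⟨l₁, l₂, rfl⟩ := ih
    obtain ⟨m₁, m₂, e⟩ := inv_genX_mul_posWord n l₁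
    refine ⟨m₁, l₂ ++ m₂, ?_⟩
    rw [← mul_assoc, e, posWord_append, mul_inv_rev, mul_assoc]

/-! ### Faithfulness of the action -/

theorem rho_posWord_le (l : List ℕ) (t : ℝ) : rho (posWord l) t ≤ t := by
  induction l with
  | nil => simp [posWord]
  | cons i l ih =>
    rw [posWord_cons, map_mul, rho_genX]
    exact (lineMap_le i _).trans ih

theorem rho_posWord_fix (l : List ℕ) (t : ℝ) (hl : ∀ i ∈ l, t ≤ i) :
    rho (posWord l) t = t := by
  induction l with
  | nil => simp [posWord]
  | cons i l ih =>
    rw [posWord_cons, map_mul, rho_genX, RelIso.coe_mul, Function.comp_apply,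
      ih fun j hj => hl j (by simp [hj]), lineMap_of_le (hl i (by simp))]

/-- A word beginning with `xᵢ` moves `i + 1`, unlike a word in later generators. -/
theorem rho_posWord_cons_ne (i : ℕ) (l l' : List ℕ) (hl' : ∀ j ∈ l', i < j) :
    rho (posWord (i :: l)) ≠ rho (posWord l') := by
  intro h
  have h1 : rho (posWord l') (i + 1) = i + 1 :=
    rho_posWord_fix l' _ fun j hj => by exact_mod_cast hl' j hj
  have h2 : rho (posWord (i :: l)) (i + 1) < i + 1 := by
    rw [posWord_cons, map_mul, rho_genX]
    exact ((lineMap i).monotone (rho_posWord_le l _)).trans_lt (lineMap_lt i)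
  rw [h, h1] at h2
  exact lt_irrefl _ h2

theorem sorted_unique (l l' : List ℕ) (hl : l.Pairwise (· ≤ ·)) (hl' : l'.Pairwise (· ≤ ·))
    (h : rho (posWord l) = rho (posWord l')) : l = l' := by
  have hlt : ∀ {i j : ℕ} {t : List ℕ}, i < j → (j :: t).Pairwise (· ≤ ·) →
      ∀ k ∈ j :: t, i < k := by
    intro i j t hij ht k hk
    rcases List.mem_cons.1 hk with rfl | hk
    · exact hij
    · exact hij.trans_le ((List.pairwise_cons.1 ht).1 k hk)
  induction l generalizing l' with
  | nil =>
    cases l' with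
    | nil => rfl
    | cons j t' => exact absurd h.symm (rho_posWord_cons_ne j t' [] (by simp))
  | cons i t ih =>
    cases l' with
    | nil => exact absurd h (rho_posWord_cons_ne i t [] (by simp))
    | cons j t' =>
      rcases lt_trichotomy i j with hij | rfl | hij
      · exact absurd h (rho_posWord_cons_ne i t _ (hlt hij hl'))
      · rw [posWord_cons, posWord_cons, map_mul, map_mul, mul_right_inj] at h
        rw [ih t' (List.pairwise_cons.1 hl).2 (List.pairwise_cons.1 hl').2 h]
      · exact absurd h.symm (rho_posWord_cons_ne j t' _ (hlt hij hl))

theorem rho_injective : Function.Injective rho := by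
  rw [injective_iff_map_eq_one]
  intro h hh
  obtain ⟨l₁, l₂, rfl⟩ := exists_fraction h
  obtain ⟨m₁, s₁, e₁⟩ := posWord_sort l₁
  obtain ⟨m₂, s₂, e₂⟩ := posWord_sort l₂
  rw [← e₁, ← e₂] at hh ⊢
  rw [map_mul, map_inv, mul_inv_eq_one] at hh
  rw [sorted_unique m₁ m₂ s₁ s₂ hh, mul_inv_cancel]

/-! ### The law with constants -/

theorem thompson_dichotomy (h : ThompsonF) :
    Commute (h * (tx0 * tx1⁻¹) * h⁻¹) (genX 2) ∨ Commute (h * genX 2 * h⁻¹) (tx0 * tx1⁻¹) := by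
  have ha : rho (tx0 * tx1⁻¹) = lineMap 0 * (lineMap 1)⁻¹ := by
    rw [← genX_one, map_mul, map_inv, rho_genX, ← rho_genX 0]; rfl
  have back : ∀ {u v : ThompsonF}, Commute (rho u) (rho v) → Commute u v := fun {u v} huv =>
    rho_injective (by simpa only [map_mul] using huv.eq)
  have hinv : ∀ t, (rho h) ((rho h)⁻¹ t) = t := fun t => (rho h).apply_symm_apply t
  have hfix : ∀ t : ℝ, t ≤ 2 → rho (genX 2) t = t := fun t ht => by
    rw [rho_genX]; exact lineMap_of_le (by exact_mod_cast ht)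
  rcases le_total (rho h 2) 2 with h2 | h2
  · refine Or.inl (back (commute_of_support 2 (fun t ht => ?_) hfix))
    have h3 : 2 ≤ (rho h)⁻¹ t := by
      rw [← (rho h).le_iff_le, hinv]; exact h2.trans ht
    rw [map_mul, map_mul, map_inv, ha]
    change rho h ((lineMap 0 * (lineMap 1)⁻¹) ((rho h)⁻¹ t)) = t
    rw [lineMap_left_support _ h3, hinv]
  · refine Or.inr (back (commute_of_support 2 (fun t ht => ?_) (fun t ht => ?_)).symm)
    · rw [ha]; exact lineMap_left_support t ht
    · have h3 : (rho h)⁻¹ t ≤ 2 := by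
        rw [← (rho h).le_iff_le, hinv]; exact ht.trans h2
      rw [map_mul, map_mul, map_inv]
      change rho h (rho (genX 2) ((rho h)⁻¹ t)) = t
      rw [hfix _ h3, hinv]

theorem genX_ne_one (n : ℕ) : genX n ≠ 1 := by
  intro h
  have h1 := lineMap_lt n
  rw [← rho_genX, h, map_one] at h1
  exact lt_irrefl _ h1

theorem left_ne_one : tx0 * tx1⁻¹ ≠ 1 := by
  rw [← genX_one, Ne, mul_inv_eq_one]
  intro h
  have h1 : [0] = [1] := sorted_unique [0] [1] (by simp) (by simp) (by
    simp only [posWord, List.map_cons, List.map_nil, List.prod_cons, List.prod_nil, mul_one, ← h]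
    rfl)
  simp at h1

/-- No limit of a convergent sequence of markings `(F, (x₀, x₁, g_{n,1}, …, g_{n,s}))` of
Thompson's group `F` is a free product `F ∗ K` with `K` nontrivial (compatibly with the
marking on the `F`-part). -/
theorem stmt0 (s : ℕ) (hs : 1 ≤ s) (g : ℕ → Fin s → ThompsonF)
    (ev : ℕ → FreeGroup (Fin (s + 2)) →* ThompsonF)
    (hev : ∀ n, ev n = FreeGroup.lift (fun i : Fin (s + 2) =>
      if h : (i : ℕ) < 2 then (if (i : ℕ) = 0 then tx0 else tx1)
      else g n ⟨(i : ℕ) - 2, by have := i.isLt; omega⟩))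
    (hconv : ∀ w : FreeGroup (Fin (s + 2)),
      (∀ᶠ n in Filter.atTop, ev n w = 1) ∨ (∀ᶠ n in Filter.atTop, ev n w ≠ 1))
    (N : Subgroup (FreeGroup (Fin (s + 2)))) [hN : N.Normal]
    (hNdef : ∀ w, w ∈ N ↔ ∀ᶠ n in Filter.atTop, ev n w = 1)
    (K : Type*) [Group K] (hK : ∃ k : K, k ≠ 1) :
    ¬ ∃ φ : (FreeGroup (Fin (s + 2)) ⧸ N) ≃* Monoid.Coprod ThompsonF K,
      φ (QuotientGroup.mk (FreeGroup.of ⟨0, by omega⟩)) = Monoid.Coprod.inl tx0 ∧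
      φ (QuotientGroup.mk (FreeGroup.of ⟨1, by omega⟩)) = Monoid.Coprod.inl tx1 := by
  rintro ⟨φ, h0, h1⟩
  obtain ⟨k, hk⟩ := hK
  -- A word `w` representing `k`, and words `A`, `B` for `x₀x₁⁻¹` and `x₂`.
  obtain ⟨w, hw⟩ := QuotientGroup.mk_surjective (φ.symm (Monoid.Coprod.inr k))
  let y0 : FreeGroup (Fin (s + 2)) := FreeGroup.of ⟨0, by omega⟩
  let y1 : FreeGroup (Fin (s + 2)) := FreeGroup.of ⟨1, by omega⟩
  let A := y0 * y1⁻¹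
  let B := (y0 ^ 1)⁻¹ * y1 * y0 ^ 1
  let ψ : FreeGroup (Fin (s + 2)) →* Monoid.Coprod ThompsonF K :=
    φ.toMonoidHom.comp (QuotientGroup.mk' N)
  have hψw : ψ w = Monoid.Coprod.inr k := by
    change φ (QuotientGroup.mk w) = _
    rw [hw, MulEquiv.apply_symm_apply]
  have hψ0 : ψ y0 = Monoid.Coprod.inl tx0 := h0
  have hψ1 : ψ y1 = Monoid.Coprod.inl tx1 := h1
  have hψA : ψ A = Monoid.Coprod.inl (tx0 * tx1⁻¹) := by
    simp only [A, map_mul, map_inv, hψ0, hψ1]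
  have hψB : ψ B = Monoid.Coprod.inl (genX 2) := by
    simp only [B, genX, map_mul, map_inv, map_pow, hψ0, hψ1]
  have hev0 : ∀ n, ev n y0 = tx0 := fun n => by simp [hev, y0]
  have hev1 : ∀ n, ev n y1 = tx1 := fun n => by simp [hev, y1]
  have hevA : ∀ n, ev n A = tx0 * tx1⁻¹ := fun n => by
    simp only [A, map_mul, map_inv, hev0, hev1]
  have hevB : ∀ n, ev n B = genX 2 := fun n => by
    simp only [B, genX, map_mul, map_inv, map_pow, hev0, hev1]
  have hker : ∀ v, (∀ᶠ n in Filter.atTop, ev n v = 1) → ψ v = 1 := fun v hv => by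
    change φ (QuotientGroup.mk v) = 1
    rw [(QuotientGroup.eq_one_iff v).2 ((hNdef v).2 hv), map_one]
  have hW1 : ∀ᶠ n in Filter.atTop, ev n (commWord (w * A * w⁻¹) B) ≠ 1 := by
    refine (hconv _).resolve_left fun hv => ?_
    have := hker _ hv
    simp only [commWord, map_mul, map_inv, hψw, hψA, hψB] at this
    exact coprod_not_commute left_ne_one (genX_ne_one 2) hk ((commWord_eq_one_iff _ _).1
      (by simpa only [commWord, map_mul, map_inv] using this))
  have hW2 : ∀ᶠ n in Filter.atTop, ev n (commWord (w * B * w⁻¹) A) ≠ 1 := by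
    refine (hconv _).resolve_left fun hv => ?_
    have := hker _ hv
    simp only [commWord, map_mul, map_inv, hψw, hψA, hψB] at this
    exact coprod_not_commute (genX_ne_one 2) left_ne_one hk ((commWord_eq_one_iff _ _).1
      (by simpa only [commWord, map_mul, map_inv] using this))
  obtain ⟨n, hn1, hn2⟩ := (hW1.and hW2).exists
  have hc : ∀ u v, ev n (commWord u v) = commWord (ev n u) (ev n v) := fun u v => by
    simp [commWord]
  rw [hc, Ne, commWord_eq_one_iff] at hn1 hn2
  simp only [map_mul (ev n) , map_inv (ev n), hevA, hevB] at hn1 hn2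
  rcases thompson_dichotomy (ev n w) with h | h
  · exact hn1 h
  · exact hn2 h
end

section
/- Let F∞ be the presented group on generators x₀, x₁, x₂, … (indexed by ℕ) with relations x_j x_i = x_i x_{j+1} for all i < j. Let n ∈ ℕ and let a₀,…,a_n, b₀,…,b_n be non-negative integers, and set g = x₀^{a₀} x₁^{a₁} ⋯ x_n^{a_n} x_n^{−b_n} ⋯ x₁^{−b₁} x₀^{−b₀} in F∞, s = Σ_{i=0}^{n} (a_i − b_i), and t = |s|. Then there exists M ∈ ℕ such that either g⁻¹ x_m g = x_{m+t} for all m > M, or g x_m g⁻¹ = x_{m+t} for all m > M. -/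
/-!
Conjugation by a generator `x_i` raises the index of every later generator by one, so conjugation
by a positive word `P` in `x₀, …, x_n` raises the index of `x_m` (`m > n`) by the exponent sum
of `P` (`semiconjBy_prod_xi`). Writing `g = P Q⁻¹` with exponent sums `A` and `B`, conjugation by `g`
shifts indices up by `A` and down by `B`. If `B ≤ A`, the first alternative holds with
`t = A - B`; otherwise the second holds with `t = B - A`. One may take `M = n`.
-/

/-- The defining relators of the infinite presentation of Thompson's group `F`:
`x_i⁻¹ x_j x_i x_{j+1}⁻¹` for all `i < j`. -/
def thompsonInfRels : Set (FreeGroup ℕ) :=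
  {r | ∃ i j : ℕ, i < j ∧
    r = (FreeGroup.of i)⁻¹ * FreeGroup.of j * FreeGroup.of i * (FreeGroup.of (j + 1))⁻¹}

/-- Thompson's group `F` in its standard infinite presentation. -/
abbrev ThompsonFInf : Type := PresentedGroup thompsonInfRels

/-- The generator `x_i` of Thompson's group `F` (infinite presentation). -/
def xi (i : ℕ) : ThompsonFInf := PresentedGroup.of i

lemma semiconjBy_xi {i j : ℕ} (h : i < j) : SemiconjBy (xi i) (xi (j + 1)) (xi j) := by
  have key : (xi i)⁻¹ * xi j * xi i * (xi (j + 1))⁻¹ = 1 :=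
    PresentedGroup.one_of_mem (rels := thompsonInfRels) ⟨i, j, h, rfl⟩
  have h2 : (xi i)⁻¹ * xi j * xi i = xi (j + 1) := mul_inv_eq_one.mp key
  rw [SemiconjBy, ← h2]
  group

lemma semiconjBy_xi_pow {i j : ℕ} (h : i < j) (k : ℕ) :
    SemiconjBy (xi i ^ k) (xi (j + k)) (xi j) := by
  induction k with
  | zero => simp
  | succ k ih =>
    rw [pow_succ]
    exact ih.mul_left (semiconjBy_xi (h.trans_le (Nat.le_add_right j k)))

lemma semiconjBy_prod_xi (a : ℕ → ℕ) (k m : ℕ) (h : k ≤ m) :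
    SemiconjBy ((List.range k).map fun i => xi i ^ a i).prod
      (xi (m + ∑ i ∈ Finset.range k, a i)) (xi m) := by
  induction k with
  | zero => simp
  | succ k ih =>
    rw [List.range_succ, List.map_append, List.prod_append, Finset.sum_range_succ, ← add_assoc]
    simp only [List.map_cons, List.map_nil, List.prod_singleton]
    exact (ih (by omega)).mul_left (semiconjBy_xi_pow (by omega) _)

/-- If `g = x₀^{a₀} ⋯ x_n^{a_n} x_n^{-b_n} ⋯ x₀^{-b₀}` and
`t = |Σ (a_i - b_i)|`, then there is `M` such that for all `m > M`,
`g⁻¹ x_m g = x_{m+t}` or `g x_m g⁻¹ = x_{m+t}`. -/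
theorem stmt3 (n : ℕ) (a b : ℕ → ℕ)
    (g : ThompsonFInf)
    (hg : g = ((List.range (n + 1)).map fun i => xi i ^ a i).prod *
      (((List.range (n + 1)).map fun i => xi i ^ b i).prod)⁻¹)
    (s : ℤ) (hs : s = ∑ i ∈ Finset.range (n + 1), ((a i : ℤ) - (b i : ℤ)))
    (t : ℕ) (ht : (t : ℤ) = |s|) :
    ∃ M : ℕ, (∀ m : ℕ, M < m → g⁻¹ * xi m * g = xi (m + t)) ∨
      (∀ m : ℕ, M < m → g * xi m * g⁻¹ = xi (m + t)) := by
  have hP := semiconjBy_prod_xi a (n + 1)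
  have hQ := semiconjBy_prod_xi b (n + 1)
  rw [Finset.sum_sub_distrib, ← Nat.cast_sum, ← Nat.cast_sum] at hs
  generalize ∑ i ∈ Finset.range (n + 1), a i = A at *
  generalize ∑ i ∈ Finset.range (n + 1), b i = B at *
  refine ⟨n, ?_⟩
  rcases le_total B A with hBA | hAB
  · left
    intro m hm
    have hAt : A = t + B := by
      rw [hs, abs_of_nonneg (by omega)] at ht
      omega
    have h1 := hP m hm
    have h2 := hQ (m + t) (by omega)
    rw [hAt, ← add_assoc] at h1
    have h3 := h1.mul_left h2.inv_symm_left
    rw [← hg] at h3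
    rw [mul_assoc, ← h3.eq, inv_mul_cancel_left]
  · right
    intro m hm
    have hBt : B = t + A := by
      rw [hs, abs_of_nonpos (by omega)] at ht
      omega
    have h1 := hP (m + t) (by omega)
    have h2 := hQ m hm
    rw [hBt, ← add_assoc] at h2
    have h3 := h1.mul_left h2.inv_symm_left
    rw [← hg] at h3
    rw [h3.eq, mul_inv_cancel_right]
end

section
/- Let F∞ be the presented group on generators x₀, x₁, x₂, … (indexed by ℕ) with relations x_j x_i = x_i x_{j+1} for all i < j. Let n ∈ ℕ and let a₀,…,a_n, b₀,…,b_n be non-negative integers, and set g = x₀^{a₀} x₁^{a₁} ⋯ x_n^{a_n} x_n^{−b_n} ⋯ x₁^{−b₁} x₀^{−b₀} in F∞, s = Σ_{i=0}^{n} (a_i − b_i), and t = |s|. Then there exists M ∈ ℕ such that either g^{−k} x_m g^{k} = x_{m+kt} for all m > M and all integers k > 0, or g^{k} x_m g^{−k} = x_{m+kt} for all m > M and all integers k > 0. -/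
theorem xi_mul_xi {i j : ℕ} (h : i < j) : xi j * xi i = xi i * xi (j + 1) := by
  have h1 : (PresentedGroup.mk thompsonInfRels)
      ((FreeGroup.of i)⁻¹ * FreeGroup.of j * FreeGroup.of i * (FreeGroup.of (j + 1))⁻¹) = 1 :=
    PresentedGroup.one_of_mem ⟨i, j, h, rfl⟩
  simp only [map_mul, map_inv] at h1
  have h2 : (xi i)⁻¹ * xi j * xi i * (xi (j + 1))⁻¹ = 1 := h1
  rw [mul_inv_eq_one, mul_assoc, inv_mul_eq_iff_eq_mul] at h2
  exact h2

theorem xi_mul_pow {i j : ℕ} (h : i < j) (c : ℕ) :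
    xi j * xi i ^ c = xi i ^ c * xi (j + c) := by
  induction c with
  | zero => simp
  | succ c ih =>
    rw [pow_succ, ← mul_assoc, ih, mul_assoc, xi_mul_xi (by omega), ← mul_assoc, add_assoc]

/-- A positive word in `x_0, …, x_{N-1}` shifts all `x_m` with `m ≥ N` by its length. -/
theorem xi_mul_word (c : ℕ → ℕ) (N m : ℕ) (h : N ≤ m) :
    xi m * ((List.range N).map fun i => xi i ^ c i).prod =
      ((List.range N).map fun i => xi i ^ c i).prod * xi (m + ∑ i ∈ Finset.range N, c i) := by
  induction N with
  | zero => simp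
  | succ N ih =>
    rw [List.range_succ, List.map_append, List.prod_append, ← mul_assoc, ih (by omega),
      Finset.sum_range_succ]
    simp only [List.map_cons, List.map_nil, List.prod_cons, List.prod_nil, mul_one]
    rw [mul_assoc, xi_mul_pow (by omega), ← mul_assoc, add_assoc]

/-- Quotients `P Q⁻¹` of index-shifting elements shift by the difference of the two amounts,
provided this difference `t` is non-negative. -/
theorem conj_shift {P Q : ThompsonFInf} {n A B t : ℕ}
    (hP : ∀ m, n < m → xi m * P = P * xi (m + A))
    (hQ : ∀ m, n < m → xi m * Q = Q * xi (m + B)) (hAB : A = B + t) (m : ℕ) (hm : n < m) :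
    (P * Q⁻¹)⁻¹ * xi m * (P * Q⁻¹) = xi (m + t) := by
  have h1 := hP m hm
  have h2 := hQ (m + t) (by omega)
  rw [show m + t + B = m + A by omega] at h2
  calc (P * Q⁻¹)⁻¹ * xi m * (P * Q⁻¹) = Q * P⁻¹ * (xi m * P) * Q⁻¹ := by group
    _ = Q * xi (m + A) * Q⁻¹ := by rw [h1]; group
    _ = xi (m + t) := by rw [← h2]; group

theorem conj_shift_pow {h : ThompsonFInf} {n t : ℕ}
    (hh : ∀ m, n < m → h⁻¹ * xi m * h = xi (m + t)) (m : ℕ) (hm : n < m) (k : ℕ) :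
    h⁻¹ ^ k * xi m * h ^ k = xi (m + k * t) := by
  induction k with
  | zero => simp
  | succ k ih =>
    have h1 := hh (m + k * t) (by omega)
    rw [← ih] at h1
    rw [add_mul, one_mul, ← add_assoc, ← h1, pow_succ', pow_succ]
    simp only [mul_assoc]

/-- If `g = x₀^{a₀} ⋯ x_n^{a_n} x_n^{-b_n} ⋯ x₀^{-b₀}` and
`t = |Σ (a_i - b_i)|`, then there is `M` such that for all `m > M` and all `k > 0`,
`g⁻ᵏ x_m gᵏ = x_{m+kt}` or `gᵏ x_m g⁻ᵏ = x_{m+kt}`. -/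
theorem stmt4 (n : ℕ) (a b : ℕ → ℕ)
    (g : ThompsonFInf)
    (hg : g = ((List.range (n + 1)).map fun i => xi i ^ a i).prod *
      (((List.range (n + 1)).map fun i => xi i ^ b i).prod)⁻¹)
    (s : ℤ) (hs : s = ∑ i ∈ Finset.range (n + 1), ((a i : ℤ) - (b i : ℤ)))
    (t : ℕ) (ht : (t : ℤ) = |s|) :
    ∃ M : ℕ,
      (∀ m : ℕ, M < m → ∀ k : ℕ, 0 < k → g⁻¹ ^ k * xi m * g ^ k = xi (m + k * t)) ∨
      (∀ m : ℕ, M < m → ∀ k : ℕ, 0 < k → g ^ k * xi m * g⁻¹ ^ k = xi (m + k * t)) := by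
  have hP := fun m (hm : n < m) => xi_mul_word a (n + 1) m hm
  have hQ := fun m (hm : n < m) => xi_mul_word b (n + 1) m hm
  rw [Finset.sum_sub_distrib] at hs
  rw [hs] at ht
  have hcast : ∀ c : ℕ → ℕ, ∑ i ∈ Finset.range (n + 1), (c i : ℤ) =
      ((∑ i ∈ Finset.range (n + 1), c i : ℕ) : ℤ) := fun c => by push_cast; rfl
  rw [hcast, hcast] at ht
  refine ⟨n, ?_⟩
  rcases le_total (∑ i ∈ Finset.range (n + 1), b i) (∑ i ∈ Finset.range (n + 1), a i) with h | h
  · left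
    intro m hm k _
    rw [hg]
    refine conj_shift_pow (conj_shift hP hQ ?_) m hm k
    rw [abs_of_nonneg (by omega)] at ht
    omega
  · right
    intro m hm k _
    have hg' : g⁻¹ = ((List.range (n + 1)).map fun i => xi i ^ b i).prod *
        (((List.range (n + 1)).map fun i => xi i ^ a i).prod)⁻¹ := by
      rw [hg, mul_inv_rev, inv_inv]
    have key := conj_shift_pow (conj_shift hQ hP (t := t) ?_) m hm k
    · rwa [← hg', inv_inv] at key
    · rw [abs_of_nonpos (by omega)] at ht
      omega
end

section
/- Let α be a linear order and let p₁ ≤ q₁ < p₂ ≤ q₂ < p₃ ≤ q₃ < p₄ ≤ q₄ be elements of α. Let h₁, h₂, h₃, h₄ be permutations of α such that hᵢ fixes every point of α lying outside the closed interval [pᵢ, qᵢ] (for i = 1, 2, 3, 4), and let g be an order automorphism of α. Then, in the permutation group of α, the commutator [[g⁻¹h₁g, h₄], [g⁻¹h₂g, h₃]] equals the identity, where [a,b] = a⁻¹b⁻¹ab and g is regarded as a permutation of α. -/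
theorem commWord_eq_one_of_commute {G : Type*} [Group G] {a b : G} (h : Commute a b) :
    commWord a b = 1 := by
  rw [commWord, mul_assoc, h.eq]
  group

theorem commWord_conj_eq_one {α : Type*} {S T : Set α} {h k : Equiv.Perm α} (e : Equiv.Perm α)
    (hS : ∀ x, x ∉ S → h x = x) (hT : ∀ x, x ∉ T → k x = x)
    (hST : ∀ x, e x ∈ S → x ∉ T) : commWord (e⁻¹ * h * e) k = 1 := by
  refine commWord_eq_one_of_commute (Equiv.Perm.Disjoint.commute fun x => ?_)
  by_cases hx : e x ∈ S
  · exact Or.inr (hT x (hST x hx))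
  · left
    simp [Equiv.Perm.mul_apply, hS _ hx]

/-- The law with constants in Thompson's group `F`, in its general order-theoretic form:
for permutations `h₁, h₂, h₃, h₄` supported on four successive closed intervals of a linear
order `α` and any order automorphism `g` of `α`, the commutator
`[[g⁻¹h₁g, h₄], [g⁻¹h₂g, h₃]]` is the identity permutation. -/
theorem stmt5 (α : Type*) [LinearOrder α]
    (p₁ q₁ p₂ q₂ p₃ q₃ p₄ q₄ : α)
    (h₁₁ : p₁ ≤ q₁) (h₁₂ : q₁ < p₂) (h₂₂ : p₂ ≤ q₂) (h₂₃ : q₂ < p₃)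
    (h₃₃ : p₃ ≤ q₃) (h₃₄ : q₃ < p₄) (h₄₄ : p₄ ≤ q₄)
    (h₁ h₂ h₃ h₄ : Equiv.Perm α)
    (hs₁ : ∀ x : α, x ∉ Set.Icc p₁ q₁ → h₁ x = x)
    (hs₂ : ∀ x : α, x ∉ Set.Icc p₂ q₂ → h₂ x = x)
    (hs₃ : ∀ x : α, x ∉ Set.Icc p₃ q₃ → h₃ x = x)
    (hs₄ : ∀ x : α, x ∉ Set.Icc p₄ q₄ → h₄ x = x)
    (g : α ≃o α) :
    commWord (commWord ((g.toEquiv)⁻¹ * h₁ * g.toEquiv) h₄)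
      (commWord ((g.toEquiv)⁻¹ * h₂ * g.toEquiv) h₃) = 1 := by
  by_cases hJ : ∀ x, g.toEquiv x ∈ Set.Icc p₁ q₁ → x ∉ Set.Icc p₄ q₄
  · rw [commWord_conj_eq_one g.toEquiv hs₁ hs₄ hJ]
    exact commWord_eq_one_of_commute (Commute.one_left _)
  · push Not at hJ
    obtain ⟨x, hx₁, hx₄⟩ := hJ
    rw [commWord_conj_eq_one g.toEquiv hs₂ hs₃]
    · exact commWord_eq_one_of_commute (Commute.one_right _)
    · intro y hy₂ hy₃
      have hyx : y < x := hy₃.2.trans_lt (h₃₄.trans_le hx₄.1)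
      have hgxy : g x < g y := hx₁.2.trans_lt (h₁₂.trans_le hy₂.1)
      exact lt_asymm hgxy (g.lt_iff_lt.2 hyx)
end

section
/- In Thompson's group F, presented on two generators x₀, x₁ with the two relators [x₀x₁⁻¹, x₀⁻¹x₁x₀] and [x₀x₁⁻¹, x₀⁻²x₁x₀²], the element x₀x₁⁻¹ commutes with x₀⁻ⁱx₁x₀ⁱ for every integer i ≥ 1; that is, the relations [x₀x₁⁻¹, x₀⁻ⁱx₁x₀ⁱ] = 1 for i = 1, 2 imply the analogous relation for every i ≥ 1. -/
/-- The conjugate by `xⁱ` of the relation `[x y⁻¹, x⁻¹ y x] = 1`, written as a recurrence for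
the elements `x⁻ⁱ y xⁱ`. -/
theorem conj_recurrence {G : Type*} [Group G] {x y : G}
    (h : Commute (x * y⁻¹) (x⁻¹ ^ 1 * y * x ^ 1)) (i : ℕ) :
    x⁻¹ ^ (i + 2) * y * x ^ (i + 2) =
      (x⁻¹ ^ i * y * x ^ i)⁻¹ * (x⁻¹ ^ (i + 1) * y * x ^ (i + 1)) * (x⁻¹ ^ i * y * x ^ i) := by
  have base : x⁻¹ * x⁻¹ * y * x * x = y⁻¹ * x⁻¹ * y * x * y := by
    have h' : x * y⁻¹ * (x⁻¹ * y * x) = x⁻¹ * y * x * (x * y⁻¹) := by simpa using h.eq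
    calc x⁻¹ * x⁻¹ * y * x * x = x⁻¹ * (x⁻¹ * y * x * (x * y⁻¹)) * y := by group
      _ = x⁻¹ * (x * y⁻¹ * (x⁻¹ * y * x)) * y := by rw [h']
      _ = y⁻¹ * x⁻¹ * y * x * y := by group
  calc x⁻¹ ^ (i + 2) * y * x ^ (i + 2)
      = x⁻¹ ^ i * (x⁻¹ * x⁻¹ * y * x * x) * x ^ i := by
        rw [pow_add x⁻¹, add_comm i 2, pow_add x]; simp only [pow_two, mul_assoc]
    _ = x⁻¹ ^ i * (y⁻¹ * x⁻¹ * y * x * y) * x ^ i := by rw [base]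
    _ = _ := by
        rw [pow_succ x⁻¹, pow_succ' x]
        simp only [inv_pow, mul_inv_rev, inv_inv, mul_assoc, mul_inv_cancel_left]

theorem commute_conj_of_commute_one_two {G : Type*} [Group G] {x y : G}
    (h1 : Commute (x * y⁻¹) (x⁻¹ ^ 1 * y * x ^ 1))
    (h2 : Commute (x * y⁻¹) (x⁻¹ ^ 2 * y * x ^ 2)) (n : ℕ) :
    Commute (x * y⁻¹) (x⁻¹ ^ (n + 1) * y * x ^ (n + 1)) := by
  induction n using Nat.twoStepInduction with
  | zero => exact h1
  | one => exact h2
  | more n ih1 ih2 =>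
    rw [conj_recurrence h1 (n + 1)]
    exact (ih1.inv_right.mul_right ih2).mul_right ih1

theorem thompson_relation {i : ℕ} (hi : i ∈ ({1, 2} : Set ℕ)) :
    Commute (tx0 * tx1⁻¹) (tx0⁻¹ ^ i * tx1 * tx0 ^ i) := by
  rw [← commWord_eq_one_iff]
  exact PresentedGroup.one_of_mem (rels := thompsonRels) ⟨i, hi, rfl⟩

/-- In Thompson's group `F`, the relations `[x₀x₁⁻¹, x₀⁻ⁱx₁x₀ⁱ] = 1` for `i = 1, 2` imply
the analogous relation for every `i ≥ 1`: the element `x₀x₁⁻¹` commutes with `x₀⁻ⁱx₁x₀ⁱ`. -/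
theorem stmt8 (i : ℕ) (hi : 1 ≤ i) :
    commWord (tx0 * tx1⁻¹) (tx0⁻¹ ^ i * tx1 * tx0 ^ i) = 1 := by
  obtain ⟨n, rfl⟩ := Nat.exists_eq_add_of_le' hi
  rw [commWord_eq_one_iff]
  exact commute_conj_of_commute_one_two (thompson_relation (by simp))
    (thompson_relation (by simp)) n
end

section
/- Let H and K be groups and let f ∈ K be an element of infinite order. Let φ : ℤ ∗ H → H ∗ K be the group homomorphism from the free product of the free group on one generator y with H to the free product H ∗ K which sends y to the image of f under the canonical inclusion K → H ∗ K and sends each element of H to its image under the canonical inclusion H → H ∗ K. Then for every element w of ℤ ∗ H that does not lie in the image of the canonical inclusion H → ℤ ∗ H, one has φ(w) ≠ 1. -/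
/-!
A free product of injective homomorphisms is injective, since applying them letterwise to a reduced
word gives a reduced word of the same length (`coprodI_map_injective`). As `f` has infinite order,
`y ↦ f` embeds the free group `⟨y⟩` into `K`, so `φ` is such a free product and has trivial kernel;
an element outside the copy of `H` is in particular not `1`.

The reduced-word normal form is available for the indexed free product `Monoid.CoprodI`. To get a
family over `Bool` without universe lifts, the factors `⟨y⟩` and `H` are realised as subgroups of the
single group `H × K`, and injectivity is tested in the free product of two copies of `H × K`.
-/

/-- A free product of injective homomorphisms is injective: the letterwise image of a reduced word
is reduced, so it represents `1` only if it is empty. -/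
lemma coprodI_map_injective {ι : Type*} {G G' : ι → Type*} [∀ i, Group (G i)]
    [∀ i, Group (G' i)] (g : ∀ i, G i →* G' i) (hg : ∀ i, Function.Injective (g i)) :
    Function.Injective
      (Monoid.CoprodI.lift fun i => (Monoid.CoprodI.of : G' i →* _).comp (g i)) := by
  classical
  rw [injective_iff_map_eq_one]
  intro x hx
  obtain ⟨W, rfl⟩ := Monoid.CoprodI.Word.equiv.symm.surjective x
  let W' : Monoid.CoprodI.Word G' :=
    { toList := W.toList.map fun l => ⟨l.1, g l.1 l.2⟩
      ne_one := by
        intro l hl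
        obtain ⟨m, hm, rfl⟩ := List.mem_map.1 hl
        exact fun h => W.ne_one m hm ((injective_iff_map_eq_one _).1 (hg m.1) _ h)
      chain_ne := by
        rw [List.isChain_map]
        exact W.chain_ne }
  have hprod : W'.prod = 1 := by
    rw [← hx]
    change W'.prod = Monoid.CoprodI.lift _ W.prod
    simp [W', Monoid.CoprodI.Word.prod, map_list_prod, Function.comp_def]
  have hW' : W' = Monoid.CoprodI.Word.empty :=
    Monoid.CoprodI.Word.equiv.symm.injective
      (hprod.trans Monoid.CoprodI.Word.prod_empty.symm)
  have hnil : W.toList = [] := by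
    have h : W'.toList = [] := by rw [hW']; rfl
    simpa [W'] using h
  change W.prod = 1
  simp [Monoid.CoprodI.Word.prod, hnil]

/-- If `A` and `B` embed in `Q`, then `A ∗ B` embeds in the free product of two copies of `Q`. -/
lemma coprod_lift_injective {A B Q : Type*} [Group A] [Group B] [Group Q]
    (a : A →* Q) (b : B →* Q) (ha : Function.Injective a) (hb : Function.Injective b) :
    Function.Injective (Monoid.Coprod.lift
      ((Monoid.CoprodI.of (M := fun _ : Bool => Q) (i := true)).comp a)
      ((Monoid.CoprodI.of (M := fun _ : Bool => Q) (i := false)).comp b)) := by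
  let T : Bool → Subgroup Q := fun i => cond i a.range b.range
  let incl (i : Bool) : ↥(T i) →* Monoid.CoprodI (fun i : Bool => ↥(T i)) :=
    Monoid.CoprodI.of (M := fun i : Bool => ↥(T i)) (i := i)
  let α : Monoid.Coprod A B →* Monoid.CoprodI (fun i : Bool => ↥(T i)) :=
    Monoid.Coprod.lift
      ((incl true).comp a.rangeRestrict)
      ((incl false).comp b.rangeRestrict)
  let r : ∀ i, T i →* Monoid.Coprod A B := fun i => match i with
    | true => Monoid.Coprod.inl.comp (MonoidHom.ofInjective ha).symm.toMonoidHom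
    | false => Monoid.Coprod.inr.comp (MonoidHom.ofInjective hb).symm.toMonoidHom
  have hr : (Monoid.CoprodI.lift r).comp α = MonoidHom.id _ := by
    ext x
    · change Monoid.CoprodI.lift r (α (Monoid.Coprod.inl x)) = Monoid.Coprod.inl x
      simp only [α, incl, Monoid.Coprod.lift_apply_inl, MonoidHom.comp_apply, Monoid.CoprodI.lift_of]
      exact congrArg (Monoid.Coprod.inl : _ →* Monoid.Coprod A B)
        ((MonoidHom.ofInjective ha).symm_apply_apply x)
    · change Monoid.CoprodI.lift r (α (Monoid.Coprod.inr x)) = Monoid.Coprod.inr x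
      simp only [α, incl, Monoid.Coprod.lift_apply_inr, MonoidHom.comp_apply, Monoid.CoprodI.lift_of]
      exact congrArg (Monoid.Coprod.inr : _ →* Monoid.Coprod A B)
        ((MonoidHom.ofInjective hb).symm_apply_apply x)
  have hα : Function.Injective α :=
    Function.LeftInverse.injective (g := Monoid.CoprodI.lift r) fun x => DFunLike.congr_fun hr x
  have hinj := (coprodI_map_injective (G' := fun _ : Bool => Q) (fun i => (T i).subtype)
    fun i => (T i).subtype_injective).comp hα
  rw [← MonoidHom.coe_comp] at hinj
  convert hinj using 2
  ext x <;> simp [α, incl] <;> rfl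

lemma freeGroup_unit_lift_injective {K : Type*} [Group K] (f : K)
    (hf : ∀ k : ℤ, k ≠ 0 → f ^ k ≠ 1) :
    Function.Injective (FreeGroup.lift fun _ : Unit => f) := by
  rw [injective_iff_map_eq_one]
  intro x hx
  obtain ⟨n, rfl⟩ := FreeGroup.freeGroupUnitEquivInt.symm.surjective x
  change FreeGroup.lift _ (FreeGroup.of () ^ n) = 1 at hx
  change FreeGroup.of () ^ n = 1
  rw [map_zpow, FreeGroup.lift_apply_of] at hx
  by_cases hn : n = 0
  · simp [hn]
  · exact absurd hx (hf n hn)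

/-- If `f ∈ K` has infinite order, then the homomorphism `ℤ ∗ H →* H ∗ K` sending the free
generator `y` to `f` (included in `H ∗ K` via `K`) and restricting on `H` to the canonical
inclusion `H → H ∗ K` kills no element of `ℤ ∗ H` lying outside the canonical copy of `H`. -/
theorem stmt9 (H K : Type*) [Group H] [Group K] (f : K)
    (hf : ∀ k : ℤ, k ≠ 0 → f ^ k ≠ 1)
    (φ : Monoid.Coprod (FreeGroup Unit) H →* Monoid.Coprod H K)
    (hφ : φ = Monoid.Coprod.lift
      (FreeGroup.lift fun _ : Unit => (Monoid.Coprod.inr f : Monoid.Coprod H K))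
      (Monoid.Coprod.inl : H →* Monoid.Coprod H K)) :
    ∀ w : Monoid.Coprod (FreeGroup Unit) H,
      w ∉ Set.range (Monoid.Coprod.inr : H →* Monoid.Coprod (FreeGroup Unit) H) →
        φ w ≠ 1 := by
  intro w hw h1
  let a : FreeGroup Unit →* H × K :=
    (MonoidHom.inr H K).comp (FreeGroup.lift fun _ : Unit => f)
  let b : H →* H × K := MonoidHom.inl H K
  have ha : Function.Injective a :=
    (Prod.mk_right_injective (1 : H)).comp (freeGroup_unit_lift_injective f hf)
  have hb : Function.Injective b := Prod.mk_left_injective (1 : K)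
  let ψ : Monoid.Coprod H K →* Monoid.CoprodI (fun _ : Bool => H × K) :=
    Monoid.Coprod.lift
      ((Monoid.CoprodI.of (M := fun _ : Bool => H × K) (i := false)).comp (MonoidHom.inl H K))
      ((Monoid.CoprodI.of (M := fun _ : Bool => H × K) (i := true)).comp (MonoidHom.inr H K))
  have hψ : ψ.comp φ = Monoid.Coprod.lift
      ((Monoid.CoprodI.of (M := fun _ : Bool => H × K) (i := true)).comp a)
      ((Monoid.CoprodI.of (M := fun _ : Bool => H × K) (i := false)).comp b) := by
    subst hφ
    ext x <;> simp [ψ, a, b]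
  have hinj := coprod_lift_injective a b ha hb
  rw [← hψ, injective_iff_map_eq_one] at hinj
  have hw1 : w = 1 := hinj w (by rw [MonoidHom.comp_apply, h1, map_one])
  exact hw ⟨1, by rw [hw1, map_one]⟩
end

section
/- Let G be a group, let h ∈ G, let A = ⟨h⟩ be the cyclic subgroup generated by h, and let H = ⟨G, t ∣ t a t⁻¹ = a for all a ∈ A⟩ be the HNN extension of G with both associated subgroups equal to A and associated isomorphism the identity, with stable letter t. Then for all u, v ∈ G with u ∉ A and v ∉ A, the commutator [u, t⁻¹ v t] = u⁻¹ t⁻¹ v⁻¹ t u t⁻¹ v t is not equal to 1 in H. -/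
/-- Britton's-Lemma consequence: in the HNN extension `H = ⟨G, t ∣ t a t⁻¹ = a, a ∈ ⟨h⟩⟩`
of `G` centralizing the cyclic subgroup `A = ⟨h⟩`, the commutator `[u, t⁻¹ v t]` is
nontrivial whenever `u, v ∈ G` lie outside `A`. -/
theorem stmt10 (G : Type*) [Group G] (h : G)
    (u v : G) (hu : u ∉ Subgroup.zpowers h) (hv : v ∉ Subgroup.zpowers h) :
    ((HNNExtension.of u)⁻¹ * HNNExtension.t⁻¹ * (HNNExtension.of v)⁻¹ * HNNExtension.t *
        HNNExtension.of u * HNNExtension.t⁻¹ * HNNExtension.of v * HNNExtension.t :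
      HNNExtension G (Subgroup.zpowers h) (Subgroup.zpowers h)
        (MulEquiv.refl (Subgroup.zpowers h))) ≠ 1 := by
  intro heq
  -- The commutator is the product of a reduced word with four stable letters: a pinch would
  -- need one of `v⁻¹`, `u`, `v` to lie in `⟨h⟩`.
  let w : HNNExtension.NormalWord.ReducedWord G (Subgroup.zpowers h) (Subgroup.zpowers h) :=
    { head := u⁻¹
      toList := [(-1, v⁻¹), (1, u), (-1, v), (1, 1)]
      chain := by simp [hu, hv] }
  -- Britton's Lemma: the exponents of `t` in a reduced word are determined by its product, so
  -- they would have to agree with those of the empty word.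
  have key := (HNNExtension.ReducedWord.map_fst_eq_and_of_prod_eq
    (MulEquiv.refl (Subgroup.zpowers h)) (w₁ := w)
    (w₂ := HNNExtension.NormalWord.ReducedWord.empty G _ _) (by
      simpa [w, HNNExtension.NormalWord.ReducedWord.prod,
        HNNExtension.NormalWord.ReducedWord.empty, mul_assoc] using heq)).1
  simp [w, HNNExtension.NormalWord.ReducedWord.empty] at key
end
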